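/- Let n, m be positive integers and let 𝒜 ∈ ℂ^{2n×2n}, ℬ ∈ ℂ^{2n×2m}, 𝒞 ∈ ℂ^{2m×2n}, 𝒟 ∈ ℂ^{2m×2m} satisfy the physical realizability conditions 𝒜 + 𝒜^♭ + ℬ·ℬ^♭ = 0 and ℬ = −𝒞^♭·𝒟, and suppose 𝒟^♭·𝒟 = 𝒟·𝒟^♭ = I_{2m}. Define the transfer matrix Ξ(s) := 𝒞·(sI − 𝒜)^{−1}·ℬ + 𝒟. Then for every s ∈ ℂ such that both sI − 𝒜 and −conj(s)·I − 𝒜 are invertible, the all-pass identity Ξ(−conj(s))^♭ · Ξ(s) = I_{2m} holds. -/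

import Mathlib

open Matrix

noncomputable section

/-- The matrix `J_k = diag(I_k, -I_k)` over `ℂ`. -/
def Jc (k : Type*) [Fintype k] [DecidableEq k] : Matrix (k ⊕ k) (k ⊕ k) ℂ :=
  Matrix.fromBlocks 1 0 0 (-1)

/-- The `♭`-adjoint `X^♭ = J_r · Xᴴ · J_k` of a `2k × 2r` complex matrix. -/
def flatAdj {k r : Type*} [Fintype k] [Fintype r] [DecidableEq k] [DecidableEq r]
    (X : Matrix (k ⊕ k) (r ⊕ r) ℂ) : Matrix (r ⊕ r) (k ⊕ k) ℂ :=
  Jc r * Xᴴ * Jc k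

theorem Jc_sq (k : Type*) [Fintype k] [DecidableEq k] : Jc k * Jc k = 1 := by
  simp [Jc, Matrix.fromBlocks_multiply]

theorem Jc_H (k : Type*) [Fintype k] [DecidableEq k] : (Jc k)ᴴ = Jc k := by
  simp [Jc, Matrix.fromBlocks_conjTranspose]

theorem flat_mul {k r l : Type*} [Fintype k] [Fintype r] [Fintype l] [DecidableEq k]
    [DecidableEq r] [DecidableEq l]
    (X : Matrix (k ⊕ k) (r ⊕ r) ℂ) (Y : Matrix (r ⊕ r) (l ⊕ l) ℂ) :
    flatAdj (X * Y) = flatAdj Y * flatAdj X := by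
  have h : Yᴴ * (Jc r * Jc r) * Xᴴ = Yᴴ * Xᴴ := by rw [Jc_sq, Matrix.mul_one]
  simp only [flatAdj, Matrix.conjTranspose_mul]
  rw [← h]
  simp only [Matrix.mul_assoc]

theorem flat_flat {k r : Type*} [Fintype k] [Fintype r] [DecidableEq k] [DecidableEq r]
    (X : Matrix (k ⊕ k) (r ⊕ r) ℂ) : flatAdj (flatAdj X) = X := by
  simp only [flatAdj, Matrix.conjTranspose_mul, Jc_H, Matrix.conjTranspose_conjTranspose]
  rw [Matrix.mul_assoc, Matrix.mul_assoc, Matrix.mul_assoc, Jc_sq, ← Matrix.mul_assoc, Jc_sq,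
    Matrix.one_mul, Matrix.mul_one]

theorem flat_add {k r : Type*} [Fintype k] [Fintype r] [DecidableEq k] [DecidableEq r]
    (X Y : Matrix (k ⊕ k) (r ⊕ r) ℂ) : flatAdj (X + Y) = flatAdj X + flatAdj Y := by
  simp [flatAdj, Matrix.mul_add, Matrix.add_mul]

theorem flat_neg {k r : Type*} [Fintype k] [Fintype r] [DecidableEq k] [DecidableEq r]
    (X : Matrix (k ⊕ k) (r ⊕ r) ℂ) : flatAdj (-X) = -flatAdj X := by
  simp [flatAdj]

theorem flat_one {k : Type*} [Fintype k] [DecidableEq k] :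
    flatAdj (1 : Matrix (k ⊕ k) (k ⊕ k) ℂ) = 1 := by
  simp [flatAdj, Jc_sq]

theorem flat_smul {k r : Type*} [Fintype k] [Fintype r] [DecidableEq k] [DecidableEq r]
    (c : ℂ) (X : Matrix (k ⊕ k) (r ⊕ r) ℂ) :
    flatAdj (c • X) = (starRingEnd ℂ c) • flatAdj X := by
  simp [flatAdj]

/-- under the physical realizability conditions
`𝒜 + 𝒜^♭ + ℬ ℬ^♭ = 0`, `ℬ = -𝒞^♭ 𝒟` and `𝒟^♭ 𝒟 = 𝒟 𝒟^♭ = I`, the transfer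
matrix `Ξ(s) = 𝒞 (sI - 𝒜)⁻¹ ℬ + 𝒟` satisfies the all-pass identity
`Ξ(-conj s)^♭ Ξ(s) = I` at every `s` where both resolvents exist. -/
theorem all_pass_identity
    (n m : ℕ) (hn : 0 < n) (hm : 0 < m)
    (𝒜 : Matrix (Fin n ⊕ Fin n) (Fin n ⊕ Fin n) ℂ)
    (ℬ : Matrix (Fin n ⊕ Fin n) (Fin m ⊕ Fin m) ℂ)
    (𝒞 : Matrix (Fin m ⊕ Fin m) (Fin n ⊕ Fin n) ℂ)
    (𝒟 : Matrix (Fin m ⊕ Fin m) (Fin m ⊕ Fin m) ℂ)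
    (hPR1 : 𝒜 + flatAdj 𝒜 + ℬ * flatAdj ℬ = 0)
    (hPR2 : ℬ = -(flatAdj 𝒞 * 𝒟))
    (h𝒟1 : flatAdj 𝒟 * 𝒟 = 1) (h𝒟2 : 𝒟 * flatAdj 𝒟 = 1)
    (Ξ : ℂ → Matrix (Fin m ⊕ Fin m) (Fin m ⊕ Fin m) ℂ)
    (hΞ : ∀ s : ℂ,
      Ξ s = 𝒞 * (s • (1 : Matrix (Fin n ⊕ Fin n) (Fin n ⊕ Fin n) ℂ) - 𝒜)⁻¹ * ℬ + 𝒟) :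
    ∀ s : ℂ,
      IsUnit (s • (1 : Matrix (Fin n ⊕ Fin n) (Fin n ⊕ Fin n) ℂ) - 𝒜).det →
      IsUnit ((-(starRingEnd ℂ s)) • (1 : Matrix (Fin n ⊕ Fin n) (Fin n ⊕ Fin n) ℂ) - 𝒜).det →
      flatAdj (Ξ (-(starRingEnd ℂ s))) * Ξ s = 1 := by
  intro s h1 h2
  have hR := Matrix.mul_nonsing_inv _ h1
  have hS := congrArg flatAdj (Matrix.mul_nonsing_inv _ h2)
  rw [hΞ, hΞ]
  generalize (s • (1 : Matrix (Fin n ⊕ Fin n) (Fin n ⊕ Fin n) ℂ) - 𝒜)⁻¹ = R at *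
  generalize ((-(starRingEnd ℂ s)) • (1 : Matrix (Fin n ⊕ Fin n) (Fin n ⊕ Fin n) ℂ) - 𝒜)⁻¹ = S at *
  rw [flat_mul, sub_eq_add_neg, flat_add, flat_smul, flat_neg, flat_one, map_neg,
    Complex.conj_conj] at hS
  rw [flat_add, flat_mul, flat_mul]
  generalize flatAdj S = T at *
  have hB : flatAdj ℬ = -(flatAdj 𝒟 * 𝒞) := by
    rw [hPR2, flat_neg, flat_mul, flat_flat]
  have hCD : flatAdj 𝒞 * 𝒟 = -ℬ := by rw [hPR2, neg_neg]
  have hDC : flatAdj 𝒟 * 𝒞 = -flatAdj ℬ := by rw [hB, neg_neg]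
  have hCC : flatAdj 𝒞 * 𝒞 = ℬ * flatAdj ℬ := by
    rw [hB]
    rw [hPR2]
    rw [Matrix.neg_mul, Matrix.mul_neg, neg_neg, Matrix.mul_assoc, ← Matrix.mul_assoc 𝒟, h𝒟2, Matrix.one_mul]
  have hBB : ℬ * flatAdj ℬ = (s • 1 - 𝒜) + (-s • 1 + -flatAdj 𝒜) := by
    rw [eq_neg_of_add_eq_zero_right hPR1, neg_smul]
    abel
  have key : T * (ℬ * flatAdj ℬ) * R = T + R := by
    rw [hBB, Matrix.mul_add, Matrix.add_mul, hS, Matrix.one_mul, Matrix.mul_assoc, hR,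
      Matrix.mul_one]
  have e1 : flatAdj ℬ * (T * flatAdj 𝒞) * (𝒞 * R * ℬ)
      = flatAdj ℬ * (T * (flatAdj 𝒞 * 𝒞) * R) * ℬ := by
    simp only [Matrix.mul_assoc]
  have e2 : flatAdj ℬ * (T * flatAdj 𝒞) * 𝒟 = flatAdj ℬ * (T * (flatAdj 𝒞 * 𝒟)) := by
    simp only [Matrix.mul_assoc]
  have e3 : flatAdj 𝒟 * (𝒞 * R * ℬ) = (flatAdj 𝒟 * 𝒞) * (R * ℬ) := by
    simp only [Matrix.mul_assoc]
  rw [Matrix.add_mul, Matrix.mul_add, Matrix.mul_add, e1, e2, e3, hCC, key, hCD, hDC, h𝒟1]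
  simp only [Matrix.mul_add, Matrix.add_mul, Matrix.mul_neg, Matrix.neg_mul, Matrix.mul_assoc]
  abel
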